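/- As T → 0⁺, the quantity m_μ(T) := (1/(4πμ)) ∫_{ℝ³} (1/K_{T,μ}(p) − 1/|p|²) dp satisfies m_μ(T) = μ^{−1/2}(ln(μ/T) + γ − 2 + ln(8/π) + o(1)), where K_{T,μ}(p) = |p|² − μ)·coth((|p|² − μ)/(2T)) in the sense K_{T,μ}(p) = (|p|² − μ)(e^{(|p|²−μ)/T} + 1)/(e^{(|p|²−μ)/T} − 1), γ is Euler's constant. -/

import Mathlib

open Real Filter MeasureTheory

noncomputable def KTmu (T μ : ℝ) (p : EuclideanSpace ℝ (Fin 3)) : ℝ :=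
  if ‖p‖ ^ 2 = μ then 2 * T
  else (‖p‖ ^ 2 - μ) * (Real.exp ((‖p‖ ^ 2 - μ) / T) + 1)
        / (Real.exp ((‖p‖ ^ 2 - μ) / T) - 1)

noncomputable def mμ (μ T : ℝ) : ℝ :=
  (1 / (4 * Real.pi * μ)) *
    ∫ p : EuclideanSpace ℝ (Fin 3), (1 / KTmu T μ p - 1 / ‖p‖ ^ 2)

/-!
With `x = ‖p‖² / μ - 1` and `c = μ / T` the quantity `√μ * mμ μ T` becomes half the integral over
`x > -1` of `tanh (c * x / 2) * √(1 + x) / x - (√(1 + x))⁻¹`. Reflecting the part `x < 0` gives,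
for each sign, a weight `w x = √(1 ± x)` against the kernel `tanh (c * x / 2) / x` on `x > 0`. As
`w x - 1 = O(x)` and `1 - tanh (c * x / 2)` decays like `exp (-(c * x))`, replacing `w` by `1` in
the kernel and adding `(w x - 1) / x` costs only `O(c⁻¹)`. After subtracting the regulator
`(1 + x)⁻¹`, the kernel integrates to `log c + γ + log (2 / π)`: Euler's constant is minus the
derivative of `Γ` at `1`, up to an integration by parts, `log c` is a Frullani integral, and
`log (2 / π)` is Wallis' product, since damping `(tanh (x / 2) - (1 - exp (-x))) / x` by
`1 - exp (-(2 * n * x))` leaves a finite sum of Frullani integrals adding up to minus the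
logarithm of the `n`-th partial product. The remaining elementary integrals are `2 * log 2` and
`2 * log 2 - 4`.
-/

open Set Topology

/-! ### Frullani's integral and Euler's constant -/

theorem tendsto_integral_Ioi_mul_one_sub_exp {f : ℝ → ℝ} (hf : IntegrableOn f (Ioi 0)) :
    Tendsto (fun b => ∫ x in Ioi 0, f x * (1 - exp (-(b * x)))) atTop (𝓝 (∫ x in Ioi 0, f x)) := by
  refine tendsto_integral_filter_of_dominated_convergence (fun x => |f x|) ?_ ?_ hf.abs ?_
  · exact .of_forall fun b => hf.aestronglyMeasurable.mul (by fun_prop)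
  · filter_upwards [eventually_ge_atTop 0] with b hb
    refine ae_restrict_of_forall_mem measurableSet_Ioi fun x (hx : 0 < x) => ?_
    have h_le : exp (-(b * x)) ≤ 1 := exp_le_one_iff.2 (neg_nonpos.2 (by positivity))
    rw [norm_mul, norm_eq_abs, norm_eq_abs, abs_of_nonneg (sub_nonneg.2 h_le)]
    exact mul_le_of_le_one_right (abs_nonneg _) (sub_le_self _ (exp_pos _).le)
  · refine ae_restrict_of_forall_mem measurableSet_Ioi fun x (hx : 0 < x) => ?_
    have h_exp := tendsto_exp_neg_atTop_nhds_zero.comp (tendsto_id.atTop_mul_const hx)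
    simpa using (h_exp.const_sub 1).const_mul (f x)

theorem abs_exp_neg_mul_sub_exp_neg_mul_div_le {a b x : ℝ} (hx : 0 < x) :
    |(exp (-(a * x)) - exp (-(b * x))) / x| ≤ |b - a| * exp (-(min a b * x)) := by
  wlog hab : a ≤ b generalizing a b
  · rw [← abs_neg, ← neg_div, neg_sub, abs_sub_comm, min_comm]
    exact this (le_of_not_ge hab)
  have h_factor : exp (-(b * x)) = exp (-(a * x)) * exp (-((b - a) * x)) := by
    rw [← exp_add]; ring_nf
  have h_mono : exp (-(b * x)) ≤ exp (-(a * x)) := by gcongr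
  rw [abs_of_nonneg (div_nonneg (sub_nonneg.2 h_mono) hx.le), abs_of_nonneg (sub_nonneg.2 hab),
    min_eq_left hab, div_le_iff₀ hx, h_factor]
  nlinarith [one_sub_le_exp_neg ((b - a) * x), exp_pos (-(a * x))]

section Frullani

variable {a b : ℝ} (ha : 0 < a) (hb : 0 < b)
include ha hb

theorem integrableOn_exp_neg_mul_sub_exp_neg_mul_div :
    IntegrableOn (fun x => (exp (-(a * x)) - exp (-(b * x))) / x) (Ioi 0) := by
  refine Integrable.mono'
    ((exp_neg_integrableOn_Ioi 0 (lt_min ha hb)).const_mul |b - a|)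
    (Measurable.aestronglyMeasurable (by fun_prop))
    (ae_restrict_of_forall_mem measurableSet_Ioi fun x hx => ?_)
  rw [neg_mul]
  exact abs_exp_neg_mul_sub_exp_neg_mul_div_le hx

theorem integral_exp_neg_mul_sub_exp_neg_mul_div :
    ∫ x in Ioi 0, (exp (-(a * x)) - exp (-(b * x))) / x = log (b / a) := by
  have h_cont : Continuous fun x : ℝ => exp (-x) := by fun_prop
  have h_frullani := Frullani.integral_Ioi_eq (f := fun x : ℝ => exp (-x)) (L := 1)
    (h_cont.locallyIntegrable.locallyIntegrableOn _) ha hb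
    ((h_cont.tendsto' 0 1 (by simp)).mono_left nhdsWithin_le_nhds)
    tendsto_exp_neg_atTop_nhds_zero
    (by simpa only [smul_eq_mul, ← div_eq_inv_mul] using
      integrableOn_exp_neg_mul_sub_exp_neg_mul_div ha hb)
  simpa only [smul_eq_mul, ← div_eq_inv_mul, sub_zero, mul_one] using h_frullani

end Frullani

theorem integral_log_mul_exp_neg :
    ∫ x in Ioi 0, log x * exp (-x) = -eulerMascheroniConstant := by
  have h_gamma : Complex.GammaIntegral =ᶠ[𝓝 1] Complex.Gamma := by
    filter_upwards [Complex.continuous_re.continuousAt.eventually (lt_mem_nhds one_pos)] with s hs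
    exact (Complex.Gamma_eq_integral hs).symm
  have h_deriv := ((Complex.hasDerivAt_GammaIntegral (s := 1) (by simp)).unique
    (Complex.hasDerivAt_Gamma_one.congr_of_eventuallyEq h_gamma))
  simp only [sub_self, Complex.cpow_zero, one_mul, ← Complex.ofReal_mul, integral_complex_ofReal]
    at h_deriv
  exact_mod_cast h_deriv

theorem integrableOn_log_mul_exp_neg : IntegrableOn (fun x => log x * exp (-x)) (Ioi 0) := by
  refine .of_integral_ne_zero ?_
  rw [integral_log_mul_exp_neg]
  linarith [one_half_lt_eulerMascheroniConstant]

theorem abs_one_sub_exp_neg_div_sub_inv_le {x : ℝ} (hx : 0 < x) :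
    |(1 - exp (-x)) / x - (1 + x)⁻¹| ≤ (1 + x ^ 2)⁻¹ := by
  have h_eq : (1 - exp (-x)) / x - (1 + x)⁻¹ = (1 - (1 + x) * exp (-x)) / (x * (1 + x)) := by
    field_simp
    ring
  have h_nonneg : 0 ≤ 1 - (1 + x) * exp (-x) := by
    rw [sub_nonneg, exp_neg, ← div_eq_mul_inv, div_le_one (exp_pos x), add_comm]
    exact add_one_le_exp x
  have h_le_one : 1 - (1 + x) * exp (-x) ≤ 1 := sub_le_self _ (by positivity)
  have h_le_sq : 1 - (1 + x) * exp (-x) ≤ x ^ 2 := by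
    nlinarith [one_sub_le_exp_neg x]
  rw [h_eq, abs_of_nonneg (by positivity), ← one_div, div_le_div_iff₀ (by positivity)
    (by positivity), one_mul]
  rcases le_total x 1 with hx1 | hx1
  · calc (1 - (1 + x) * exp (-x)) * (1 + x ^ 2) ≤ x ^ 2 * (1 + x ^ 2) := by gcongr
      _ ≤ x * (1 + x) := by nlinarith [pow_le_one₀ hx.le hx1 (n := 3)]
  · calc (1 - (1 + x) * exp (-x)) * (1 + x ^ 2) ≤ 1 * (1 + x ^ 2) := by gcongr
      _ ≤ x * (1 + x) := by nlinarith

theorem integrableOn_one_sub_exp_neg_div_sub_inv :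
    IntegrableOn (fun x : ℝ => (1 - exp (-x)) / x - (1 + x)⁻¹) (Ioi 0) :=
  Integrable.mono' integrable_inv_one_add_sq.integrableOn
    (Measurable.aestronglyMeasurable (by fun_prop))
    (ae_restrict_of_forall_mem measurableSet_Ioi fun _ hx => abs_one_sub_exp_neg_div_sub_inv_le hx)

theorem continuousAt_one_sub_exp_neg_mul_log :
    ContinuousAt (fun x => (1 - exp (-x)) * log x) 0 := by
  have h_slope : HasDerivAt (fun x : ℝ => 1 - exp (-x)) 1 0 := by
    simpa using (hasDerivAt_neg (0 : ℝ)).exp.const_sub 1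
  have h_isBigO : (fun x => (1 - exp (-x)) * log x) =O[𝓝 0] fun x => x * log x := by
    simpa using h_slope.isBigO_sub.mul (Asymptotics.isBigO_refl log (𝓝 0))
  have h_lim : Tendsto (fun x => x * log x) (𝓝 0) (𝓝 0) :=
    continuous_mul_log.tendsto' 0 0 (by simp)
  simpa [ContinuousAt] using h_isBigO.trans_tendsto h_lim

theorem tendsto_one_sub_exp_neg_mul_log_sub_log_one_add :
    Tendsto (fun x => (1 - exp (-x)) * log x - log (1 + x)) atTop (𝓝 0) := by
  have h_log : Tendsto (fun x => log x * exp (-x)) atTop (𝓝 0) := by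
    have h_isBigO := isLittleO_log_id_atTop.isBigO.mul
      (Asymptotics.isBigO_refl (fun x => exp (-x)) atTop)
    exact h_isBigO.trans_tendsto (by simpa using tendsto_pow_mul_exp_neg_atTop_nhds_zero 1)
  refine (((tendsto_log_comp_add_sub_log 1).neg.sub h_log).congr fun x => ?_).trans_eq (by simp)
  rw [add_comm x 1]
  ring

theorem integral_one_sub_exp_neg_div_sub_inv :
    ∫ x in Ioi 0, ((1 - exp (-x)) / x - (1 + x)⁻¹) = eulerMascheroniConstant := by
  have h_deriv : ∀ x ∈ Ioi (0 : ℝ), HasDerivAt (fun x => (1 - exp (-x)) * log x - log (1 + x))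
      (log x * exp (-x) + ((1 - exp (-x)) / x - (1 + x)⁻¹)) x := by
    intro x (hx : 0 < x)
    have h_exp : HasDerivAt (fun x : ℝ => 1 - exp (-x)) (exp (-x)) x := by
      simpa using (hasDerivAt_neg x).exp.const_sub 1
    have h_log : HasDerivAt (fun x : ℝ => log (1 + x)) (1 / (1 + x)) x :=
      ((hasDerivAt_id' x).const_add 1).log (by positivity)
    refine ((h_exp.fun_mul (hasDerivAt_log hx.ne')).sub h_log).congr_deriv ?_
    ring
  have h_zero := integral_Ioi_of_hasDerivAt_of_tendsto
    (continuousAt_one_sub_exp_neg_mul_log.sub (by fun_prop (disch := simp))).continuousWithinAt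
    h_deriv (integrableOn_log_mul_exp_neg.fun_add integrableOn_one_sub_exp_neg_div_sub_inv)
    tendsto_one_sub_exp_neg_mul_log_sub_log_one_add
  rw [integral_add integrableOn_log_mul_exp_neg integrableOn_one_sub_exp_neg_div_sub_inv,
    integral_log_mul_exp_neg] at h_zero
  simp only [Pi.sub_apply, neg_zero, exp_zero, sub_self, log_zero, mul_zero, add_zero,
    log_one] at h_zero
  linarith

/-! ### The hyperbolic tangent kernel -/

theorem tanh_half (y : ℝ) : tanh (y / 2) = (1 - exp (-y)) / (1 + exp (-y)) := by
  have h_sq : exp (-y) = exp (-(y / 2)) * exp (-(y / 2)) := by rw [← exp_add]; ring_nf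
  rw [tanh_eq, h_sq, exp_neg]
  field_simp

theorem one_sub_tanh_half_le (y : ℝ) : 1 - tanh (y / 2) ≤ 2 * exp (-y) := by
  have h_eq : 1 - tanh (y / 2) = 2 * exp (-y) / (1 + exp (-y)) := by
    rw [tanh_half]
    field_simp
    ring
  rw [h_eq]
  exact div_le_self (by positivity) (le_add_of_nonneg_right (exp_pos _).le)

@[fun_prop]
theorem continuous_tanh : Continuous tanh := by
  simp only [funext tanh_eq_sinh_div_cosh]
  exact continuous_sinh.div₀ continuous_cosh fun x => (cosh_pos x).ne'

theorem abs_tanh_half_sub_one_sub_exp_neg_div_le {x : ℝ} (hx : 0 < x) :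
    |(tanh (x / 2) - (1 - exp (-x))) / x| ≤ exp (-x) := by
  have h_eq : tanh (x / 2) - (1 - exp (-x)) = -(exp (-x) * ((1 - exp (-x)) / (1 + exp (-x)))) := by
    rw [tanh_half]
    field_simp
    ring
  have h_nonneg : 0 ≤ 1 - exp (-x) := sub_nonneg.2 (exp_le_one_iff.2 (neg_nonpos.2 hx.le))
  rw [h_eq, neg_div, abs_neg, abs_of_nonneg (by positivity), div_le_iff₀ hx]
  gcongr
  calc (1 - exp (-x)) / (1 + exp (-x)) ≤ 1 - exp (-x) :=
        div_le_self h_nonneg (le_add_of_nonneg_right (exp_pos _).le)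
    _ ≤ x := by linarith [one_sub_le_exp_neg x]

theorem integrableOn_tanh_half_sub_one_sub_exp_neg_div :
    IntegrableOn (fun x => (tanh (x / 2) - (1 - exp (-x))) / x) (Ioi 0) :=
  Integrable.mono' (integrableOn_exp_neg_Ioi 0) (Measurable.aestronglyMeasurable (by fun_prop))
    (ae_restrict_of_forall_mem measurableSet_Ioi fun _ hx =>
      abs_tanh_half_sub_one_sub_exp_neg_div_le hx)

theorem tanh_half_sub_one_sub_exp_neg_div_mul_one_sub_exp_succ (n : ℕ) (x : ℝ) :
    (tanh (x / 2) - (1 - exp (-x))) / x * (1 - exp (-(2 * (n + 1 : ℕ) * x))) =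
      (tanh (x / 2) - (1 - exp (-x))) / x * (1 - exp (-(2 * n * x))) +
        (exp (-((2 * n + 2) * x)) - exp (-((2 * n + 3) * x))) / x -
          (exp (-((2 * n + 1) * x)) - exp (-((2 * n + 2) * x))) / x := by
  have h_exp (k : ℕ) : exp (-((2 * n + k) * x)) = exp (-(2 * n * x)) * exp (-x) ^ k := by
    rw [← exp_nat_mul, ← exp_add]
    ring_nf
  have h_two : exp (-(2 * (n + 1 : ℕ) * x)) = exp (-(2 * n * x)) * exp (-x) ^ 2 := by
    rw [← h_exp]
    push_cast
    ring_nf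
  have h_one := h_exp 1
  have h_two' := h_exp 2
  have h_three := h_exp 3
  push_cast at h_one h_two' h_three
  rw [tanh_half, h_two, h_one, h_two', h_three]
  field_simp
  ring

theorem log_wallis_succ (n : ℕ) :
    log (Wallis.W (n + 1)) = log (Wallis.W n) +
      (log ((2 * n + 2) / (2 * n + 1)) - log ((2 * n + 3) / (2 * n + 2))) := by
  rw [← log_div (by positivity) (by positivity), div_div_eq_mul_div, mul_div_assoc,
    Wallis.W_succ, log_mul (Wallis.W_pos n).ne' (by positivity)]

theorem integrableOn_and_integral_tanh_half_mul_one_sub_exp (n : ℕ) :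
    IntegrableOn (fun x => (tanh (x / 2) - (1 - exp (-x))) / x * (1 - exp (-(2 * n * x)))) (Ioi 0) ∧
      ∫ x in Ioi 0, (tanh (x / 2) - (1 - exp (-x))) / x * (1 - exp (-(2 * n * x))) =
        -log (Wallis.W n) := by
  induction n with
  | zero => simp [Wallis.W]
  | succ n ih =>
    obtain ⟨ih_int, ih_val⟩ := ih
    have h₁ : (0 : ℝ) < 2 * n + 1 := by positivity
    have h₂ : (0 : ℝ) < 2 * n + 2 := by positivity
    have h₃ : (0 : ℝ) < 2 * n + 3 := by positivity
    have h_int₁ := integrableOn_exp_neg_mul_sub_exp_neg_mul_div h₁ h₂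
    have h_int₂ := integrableOn_exp_neg_mul_sub_exp_neg_mul_div h₂ h₃
    simp only [tanh_half_sub_one_sub_exp_neg_div_mul_one_sub_exp_succ]
    refine ⟨(ih_int.fun_add h_int₂).sub h_int₁, ?_⟩
    rw [integral_sub (ih_int.fun_add h_int₂) h_int₁, integral_add ih_int h_int₂, ih_val,
      integral_exp_neg_mul_sub_exp_neg_mul_div h₂ h₃,
      integral_exp_neg_mul_sub_exp_neg_mul_div h₁ h₂, log_wallis_succ]
    ring

theorem integral_tanh_half_sub_one_sub_exp_neg_div :
    ∫ x in Ioi 0, (tanh (x / 2) - (1 - exp (-x))) / x = log (2 / π) := by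
  have h_lim := (tendsto_integral_Ioi_mul_one_sub_exp
    integrableOn_tanh_half_sub_one_sub_exp_neg_div).comp
      (tendsto_natCast_atTop_atTop.const_mul_atTop two_pos)
  have h_wallis := (Wallis.tendsto_W_nhds_pi_div_two.log (by positivity)).neg
  rw [← log_inv, inv_div] at h_wallis
  exact tendsto_nhds_unique h_lim
    (h_wallis.congr fun n => (integrableOn_and_integral_tanh_half_mul_one_sub_exp n).2.symm)

section TanhKernel

variable {c : ℝ} (hc : 0 < c)
include hc

theorem tanh_mul_half_div_sub_inv_eqOn :
    EqOn (fun x => (1 - exp (-x)) / x - (1 + x)⁻¹ + (exp (-(1 * x)) - exp (-(c * x))) / x +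
        c * ((tanh (c * x / 2) - (1 - exp (-(c * x)))) / (c * x)))
      (fun x => tanh (c * x / 2) / x - (1 + x)⁻¹) (Ioi 0) := by
  intro x (hx : 0 < x)
  field_simp
  ring

theorem integrableOn_tanh_comp_mul :
    IntegrableOn (fun x => c * ((tanh (c * x / 2) - (1 - exp (-(c * x)))) / (c * x))) (Ioi 0) := by
  refine Integrable.const_mul ?_ c
  refine (integrableOn_Ioi_comp_mul_left_iff (fun x => (tanh (x / 2) - (1 - exp (-x))) / x) 0 hc).2
    ?_
  rw [mul_zero]
  exact integrableOn_tanh_half_sub_one_sub_exp_neg_div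

theorem integrableOn_tanh_mul_half_div_sub_inv :
    IntegrableOn (fun x => tanh (c * x / 2) / x - (1 + x)⁻¹) (Ioi 0) :=
  ((integrableOn_one_sub_exp_neg_div_sub_inv.fun_add
    (integrableOn_exp_neg_mul_sub_exp_neg_mul_div one_pos hc)).fun_add
      (integrableOn_tanh_comp_mul hc)).congr_fun (tanh_mul_half_div_sub_inv_eqOn hc)
        measurableSet_Ioi

theorem integral_tanh_mul_half_div_sub_inv :
    ∫ x in Ioi 0, (tanh (c * x / 2) / x - (1 + x)⁻¹) =
      log c + eulerMascheroniConstant + log (2 / π) := by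
  have h_int := integrableOn_exp_neg_mul_sub_exp_neg_mul_div one_pos hc
  have h_scale := integral_comp_mul_left_Ioi' (fun x => (tanh (x / 2) - (1 - exp (-x))) / x) 0 hc
  rw [mul_zero, integral_tanh_half_sub_one_sub_exp_neg_div, smul_eq_mul] at h_scale
  rw [← setIntegral_congr_fun measurableSet_Ioi (tanh_mul_half_div_sub_inv_eqOn hc),
    integral_add (integrableOn_one_sub_exp_neg_div_sub_inv.fun_add h_int)
      (integrableOn_tanh_comp_mul hc),
    integral_add integrableOn_one_sub_exp_neg_div_sub_inv h_int,
    integral_one_sub_exp_neg_div_sub_inv,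
    integral_exp_neg_mul_sub_exp_neg_mul_div one_pos hc, integral_const_mul, h_scale, div_one]
  ring

end TanhKernel

section Weight

variable {c L : ℝ} {w v : ℝ → ℝ}

theorem abs_one_sub_tanh_mul_sub_one_div_le (hw : ∀ x > 0, |w x - 1| ≤ L * x) {x : ℝ}
    (hx : 0 < x) : |(1 - tanh (c * x / 2)) * ((w x - 1) / x)| ≤ 2 * L * exp (-(c * x)) := by
  have h_tanh : 0 ≤ 1 - tanh (c * x / 2) := sub_nonneg.2 (tanh_lt_one _).le
  have h_slope : |(w x - 1) / x| ≤ L := by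
    rw [abs_div, abs_of_pos hx, div_le_iff₀ hx]
    exact hw x hx
  calc |(1 - tanh (c * x / 2)) * ((w x - 1) / x)|
      = (1 - tanh (c * x / 2)) * |(w x - 1) / x| := by rw [abs_mul, abs_of_nonneg h_tanh]
    _ ≤ 2 * exp (-(c * x)) * L := by
        gcongr
        exact one_sub_tanh_half_le (c * x)
    _ = 2 * L * exp (-(c * x)) := by ring

theorem integrableOn_one_sub_tanh_mul_sub_one_div (hc : 0 < c) (hwm : Measurable w)
    (hw : ∀ x > 0, |w x - 1| ≤ L * x) :
    IntegrableOn (fun x => (1 - tanh (c * x / 2)) * ((w x - 1) / x)) (Ioi 0) := by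
  refine Integrable.mono' ((exp_neg_integrableOn_Ioi 0 hc).const_mul (2 * L))
    (Measurable.aestronglyMeasurable (by fun_prop))
    (ae_restrict_of_forall_mem measurableSet_Ioi fun x hx => ?_)
  rw [neg_mul]
  exact abs_one_sub_tanh_mul_sub_one_div_le hw hx

theorem abs_integral_one_sub_tanh_mul_sub_one_div_le (hc : 0 < c)
    (hw : ∀ x > 0, |w x - 1| ≤ L * x) :
    |∫ x in Ioi 0, (1 - tanh (c * x / 2)) * ((w x - 1) / x)| ≤ 2 * L / c := by
  calc |∫ x in Ioi 0, (1 - tanh (c * x / 2)) * ((w x - 1) / x)|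
      ≤ ∫ x in Ioi 0, 2 * L * exp (-c * x) := by
        rw [← norm_eq_abs]
        refine norm_integral_le_of_norm_le ((exp_neg_integrableOn_Ioi 0 hc).const_mul (2 * L))
          (ae_restrict_of_forall_mem measurableSet_Ioi fun x hx => ?_)
        rw [neg_mul]
        exact abs_one_sub_tanh_mul_sub_one_div_le hw hx
    _ = 2 * L / c := by
        rw [integral_const_mul, integral_exp_mul_Ioi (neg_lt_zero.2 hc), mul_zero, exp_zero,
          neg_div_neg_eq, mul_one_div]

theorem tanh_mul_weight_sub_eqOn :
    EqOn (fun x => tanh (c * x / 2) / x - (1 + x)⁻¹ + ((w x - 1) / x + (1 + x)⁻¹ - v x) -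
        (1 - tanh (c * x / 2)) * ((w x - 1) / x))
      (fun x => tanh (c * x / 2) * w x / x - v x) (Ioi 0) := fun _ _ => by
  ring

variable (hc : 0 < c) (hwm : Measurable w) (hw : ∀ x > 0, |w x - 1| ≤ L * x)
  (hwv : IntegrableOn (fun x => (w x - 1) / x + (1 + x)⁻¹ - v x) (Ioi 0))
include hc hwm hw hwv

theorem integrableOn_tanh_mul_weight_sub :
    IntegrableOn (fun x => tanh (c * x / 2) * w x / x - v x) (Ioi 0) :=
  ((integrableOn_tanh_mul_half_div_sub_inv hc).fun_add hwv).sub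
    (integrableOn_one_sub_tanh_mul_sub_one_div hc hwm hw) |>.congr_fun tanh_mul_weight_sub_eqOn
      measurableSet_Ioi

theorem abs_integral_tanh_mul_weight_sub_le :
    |(∫ x in Ioi 0, (tanh (c * x / 2) * w x / x - v x)) -
        (log c + eulerMascheroniConstant + log (2 / π) +
          ∫ x in Ioi 0, ((w x - 1) / x + (1 + x)⁻¹ - v x))| ≤ 2 * L / c := by
  have h_kernel := integrableOn_tanh_mul_half_div_sub_inv hc
  rw [← setIntegral_congr_fun measurableSet_Ioi tanh_mul_weight_sub_eqOn,
    integral_sub (h_kernel.fun_add hwv) (integrableOn_one_sub_tanh_mul_sub_one_div hc hwm hw),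
    integral_add h_kernel hwv, integral_tanh_mul_half_div_sub_inv hc, sub_sub_cancel_left, abs_neg]
  exact abs_integral_one_sub_tanh_mul_sub_one_div_le hc hw

end Weight

theorem abs_sqrt_sub_one_le (y : ℝ) : |√y - 1| ≤ |y - 1| := by
  rcases le_total 0 y with hy | hy
  · have h_factor : y - 1 = (√y - 1) * (√y + 1) := by
      linear_combination -sq_sqrt hy
    rw [h_factor, abs_mul, abs_of_nonneg (by positivity : 0 ≤ √y + 1)]
    exact le_mul_of_one_le_right (abs_nonneg _) (le_add_of_nonneg_left (sqrt_nonneg y))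
  · rw [sqrt_eq_zero_of_nonpos hy, zero_sub, abs_neg, abs_one, le_abs]
    right
    linarith

theorem abs_sqrt_one_add_sub_one_le {x : ℝ} (hx : 0 < x) : |√(1 + x) - 1| ≤ 1 * x := by
  simpa [abs_of_pos hx] using abs_sqrt_sub_one_le (1 + x)

theorem abs_sqrt_one_sub_sub_one_le {x : ℝ} (hx : 0 < x) : |√(1 - x) - 1| ≤ 1 * x := by
  simpa [abs_of_pos hx] using abs_sqrt_sub_one_le (1 - x)

/-! ### The elementary integrals on the two sides of the Fermi surface -/

section AboveFermiSurface

theorem sqrt_one_add_sub_one_div_add_inv_sub_inv {x : ℝ} (hx : 0 < x) :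
    (√(1 + x) - 1) / x + (1 + x)⁻¹ - (√(1 + x))⁻¹ = ((1 + x) * (1 + √(1 + x)))⁻¹ := by
  have hs : 0 < √(1 + x) := sqrt_pos.2 (by positivity)
  have h_sq : √(1 + x) ^ 2 = 1 + x := sq_sqrt (by positivity)
  have h_slope : (√(1 + x) - 1) / x = (1 + √(1 + x))⁻¹ := by
    rw [div_eq_iff hx.ne']
    field_simp
    linear_combination h_sq
  rw [h_slope, ← h_sq, sqrt_sq hs.le]
  field_simp
  ring

theorem hasDerivAt_log_one_add_inv_sqrt_one_add {x : ℝ} (hx : 0 < x) :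
    HasDerivAt (fun x => -2 * log (1 + (√(1 + x))⁻¹)) ((1 + x) * (1 + √(1 + x)))⁻¹ x := by
  have h_pos : 0 < 1 + x := by positivity
  have h_sqrt := ((hasDerivAt_id' x).const_add 1).sqrt h_pos.ne'
  refine ((((h_sqrt.fun_inv (by positivity)).const_add 1).log (by positivity)).const_mul
    (-2)).congr_deriv ?_
  rw [sq_sqrt h_pos.le]
  field_simp
  ring

theorem tendsto_log_one_add_inv_sqrt_one_add :
    Tendsto (fun x => -2 * log (1 + (√(1 + x))⁻¹)) atTop (𝓝 0) := by
  have h_inv : Tendsto (fun x : ℝ => (√(1 + x))⁻¹) atTop (𝓝 0) :=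
    tendsto_inv_atTop_zero.comp
      (tendsto_sqrt_atTop.comp (tendsto_atTop_add_const_left _ 1 tendsto_id))
  simpa using ((h_inv.const_add 1).log (by simp)).const_mul (-2)

theorem continuousWithinAt_log_one_add_inv_sqrt_one_add :
    ContinuousWithinAt (fun x => -2 * log (1 + (√(1 + x))⁻¹)) (Ici 0) 0 := by
  refine ContinuousAt.continuousWithinAt ?_
  fun_prop (disch := simp)

theorem integrableOn_sqrt_one_add_sub_one_div :
    IntegrableOn (fun x => (√(1 + x) - 1) / x + (1 + x)⁻¹ - (√(1 + x))⁻¹) (Ioi 0) := by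
  refine IntegrableOn.congr_fun ?_
    (fun x hx => (sqrt_one_add_sub_one_div_add_inv_sub_inv hx).symm) measurableSet_Ioi
  exact integrableOn_Ioi_deriv_of_nonneg continuousWithinAt_log_one_add_inv_sqrt_one_add
    (fun x hx => hasDerivAt_log_one_add_inv_sqrt_one_add hx)
    (fun x (hx : 0 < x) => by positivity) tendsto_log_one_add_inv_sqrt_one_add

theorem integral_sqrt_one_add_sub_one_div :
    ∫ x in Ioi 0, ((√(1 + x) - 1) / x + (1 + x)⁻¹ - (√(1 + x))⁻¹) = 2 * log 2 := by
  rw [setIntegral_congr_fun measurableSet_Ioi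
      fun x hx => sqrt_one_add_sub_one_div_add_inv_sub_inv hx,
    integral_Ioi_of_hasDerivAt_of_nonneg continuousWithinAt_log_one_add_inv_sqrt_one_add
      (fun x hx => hasDerivAt_log_one_add_inv_sqrt_one_add hx)
      (fun x (hx : 0 < x) => by positivity) tendsto_log_one_add_inv_sqrt_one_add]
  norm_num

end AboveFermiSurface

section BelowFermiSurface

theorem hasDerivAt_log_one_add_sub_log_one_add_sqrt {x : ℝ} (hx : x ∈ Ioo 0 1) :
    HasDerivAt (fun x => log (1 + x) - 2 * log (1 + √(1 - x)) + 4 * √(1 - x))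
      ((√(1 - x) - 1) / x + (1 + x)⁻¹ - (√(1 - x))⁻¹) x := by
  obtain ⟨hx0, hx1⟩ := hx
  have h_pos : 0 < 1 - x := sub_pos.2 hx1
  have : 0 < √(1 - x) := sqrt_pos.2 h_pos
  have h_sqrt := ((hasDerivAt_id' x).const_sub 1).sqrt h_pos.ne'
  have h_log := ((hasDerivAt_id' x).const_add 1).log (by positivity)
  refine ((h_log.sub (((h_sqrt.const_add 1).log (by positivity)).const_mul 2)).add
    (h_sqrt.const_mul 4)).congr_deriv ?_
  have h_slope : (√(1 - x) - 1) / x = -(1 + √(1 - x))⁻¹ := by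
    rw [div_eq_iff hx0.ne']
    field_simp
    linear_combination sq_sqrt h_pos.le
  rw [h_slope]
  field_simp
  ring

theorem continuousOn_log_one_add_sub_log_one_add_sqrt :
    ContinuousOn (fun x => log (1 + x) - 2 * log (1 + √(1 - x)) + 4 * √(1 - x)) (Icc 0 1) := by
  have h_ne : ∀ x ∈ Icc (0 : ℝ) 1, 1 + x ≠ 0 := fun x hx => by linarith [hx.1]
  have h_ne' : ∀ x ∈ Icc (0 : ℝ) 1, 1 + √(1 - x) ≠ 0 := fun x _ => by positivity
  fun_prop (disch := assumption)

theorem sqrt_one_sub_sub_one_div_add_inv_sub_inv_nonpos {x : ℝ} (hx : x ∈ Ioo 0 1) :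
    (√(1 - x) - 1) / x + (1 + x)⁻¹ - (√(1 - x))⁻¹ ≤ 0 := by
  obtain ⟨hx0, hx1⟩ := hx
  have hs_le : √(1 - x) ≤ 1 := sqrt_le_one.2 (by linarith)
  have h_slope : (√(1 - x) - 1) / x ≤ 0 := div_nonpos_of_nonpos_of_nonneg (by linarith) hx0.le
  have h_inv : (1 + x)⁻¹ ≤ 1 := inv_le_one_of_one_le₀ (by linarith)
  have hs_inv : 1 ≤ (√(1 - x))⁻¹ := (one_le_inv₀ (sqrt_pos.2 (by linarith))).2 hs_le
  linarith

theorem intervalIntegrable_sqrt_one_sub_sub_one_div :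
    IntervalIntegrable (fun x => (√(1 - x) - 1) / x + (1 + x)⁻¹ - (√(1 - x))⁻¹) volume 0 1 := by
  rw [intervalIntegrable_iff_integrableOn_Ioc_of_le zero_le_one]
  refine integrable_neg_iff.1 ?_
  exact intervalIntegral.integrableOn_deriv_of_nonneg
    continuousOn_log_one_add_sub_log_one_add_sqrt.neg
    (fun x hx => (hasDerivAt_log_one_add_sub_log_one_add_sqrt hx).neg)
    fun x hx => neg_nonneg.2 (sqrt_one_sub_sub_one_div_add_inv_sub_inv_nonpos hx)

theorem intervalIntegral_sqrt_one_sub_sub_one_div :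
    ∫ x in 0..1, ((√(1 - x) - 1) / x + (1 + x)⁻¹ - (√(1 - x))⁻¹) = 3 * log 2 - 4 := by
  rw [intervalIntegral.integral_eq_sub_of_hasDerivAt_of_le zero_le_one
    continuousOn_log_one_add_sub_log_one_add_sqrt
    (fun x hx => hasDerivAt_log_one_add_sub_log_one_add_sqrt hx)
    intervalIntegrable_sqrt_one_sub_sub_one_div]
  norm_num
  ring

theorem sqrt_one_sub_sub_one_div_eqOn :
    EqOn (fun x => (√(1 - x) - 1) / x + (1 + x)⁻¹ - (√(1 - x))⁻¹)
      (fun x => (x + 1)⁻¹ - x⁻¹) (Ioi 1) := fun x (hx : 1 < x) => by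
  simp only [sqrt_eq_zero_of_nonpos (by linarith : 1 - x ≤ 0)]
  ring

theorem hasDerivAt_log_add_one_sub_log {x : ℝ} (hx : 0 < x) :
    HasDerivAt (fun x => log (x + 1) - log x) ((x + 1)⁻¹ - x⁻¹) x := by
  have h_log := ((hasDerivAt_id' x).add_const 1).log (by positivity)
  rw [one_div] at h_log
  exact h_log.sub (hasDerivAt_log hx.ne')

theorem inv_add_one_sub_inv_nonpos {x : ℝ} (hx : 0 < x) : (x + 1)⁻¹ - x⁻¹ ≤ 0 :=
  sub_nonpos.2 (inv_anti₀ hx (le_add_of_nonneg_right zero_le_one))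

theorem integrableOn_Ioi_one_sqrt_one_sub_sub_one_div :
    IntegrableOn (fun x => (√(1 - x) - 1) / x + (1 + x)⁻¹ - (√(1 - x))⁻¹) (Ioi 1) := by
  refine IntegrableOn.congr_fun ?_ sqrt_one_sub_sub_one_div_eqOn.symm measurableSet_Ioi
  exact integrableOn_Ioi_deriv_of_nonpos'
    (fun x (hx : 1 ≤ x) => hasDerivAt_log_add_one_sub_log (by linarith))
    (fun x (hx : 1 < x) => inv_add_one_sub_inv_nonpos (by linarith))
    (tendsto_log_comp_add_sub_log 1)

theorem integral_Ioi_one_sqrt_one_sub_sub_one_div :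
    ∫ x in Ioi 1, ((√(1 - x) - 1) / x + (1 + x)⁻¹ - (√(1 - x))⁻¹) = -log 2 := by
  rw [setIntegral_congr_fun measurableSet_Ioi sqrt_one_sub_sub_one_div_eqOn,
    integral_Ioi_of_hasDerivAt_of_nonpos'
      (fun x (hx : 1 ≤ x) => hasDerivAt_log_add_one_sub_log (by linarith))
      (fun x (hx : 1 < x) => inv_add_one_sub_inv_nonpos (by linarith))
      (tendsto_log_comp_add_sub_log 1)]
  norm_num

theorem integrableOn_sqrt_one_sub_sub_one_div :
    IntegrableOn (fun x => (√(1 - x) - 1) / x + (1 + x)⁻¹ - (√(1 - x))⁻¹) (Ioi 0) := by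
  rw [← Ioc_union_Ioi_eq_Ioi zero_le_one]
  exact ((intervalIntegrable_iff_integrableOn_Ioc_of_le zero_le_one).1
    intervalIntegrable_sqrt_one_sub_sub_one_div).union
      integrableOn_Ioi_one_sqrt_one_sub_sub_one_div

theorem integral_sqrt_one_sub_sub_one_div :
    ∫ x in Ioi 0, ((√(1 - x) - 1) / x + (1 + x)⁻¹ - (√(1 - x))⁻¹) = 2 * log 2 - 4 := by
  rw [← intervalIntegral.integral_interval_add_Ioi integrableOn_sqrt_one_sub_sub_one_div
      integrableOn_Ioi_one_sqrt_one_sub_sub_one_div,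
    intervalIntegral_sqrt_one_sub_sub_one_div, integral_Ioi_one_sqrt_one_sub_sub_one_div]
  ring

end BelowFermiSurface

/-! ### Reduction to one variable -/

theorem one_div_KTmu {T μ : ℝ} {p : EuclideanSpace ℝ (Fin 3)} (hp : ‖p‖ ^ 2 ≠ μ) :
    1 / KTmu T μ p = tanh ((‖p‖ ^ 2 - μ) / T / 2) / (‖p‖ ^ 2 - μ) := by
  rw [KTmu, if_neg hp, one_div_div, mul_comm, ← div_div, tanh_half, exp_neg]
  congr 1
  field_simp

theorem ae_norm_sq_ne (μ : ℝ) : ∀ᵐ p : EuclideanSpace ℝ (Fin 3), ‖p‖ ^ 2 ≠ μ := by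
  have h_sphere : ∀ᵐ p : EuclideanSpace ℝ (Fin 3), p ∉ Metric.sphere 0 √μ :=
    measure_eq_zero_iff_ae_notMem.1 (Measure.addHaar_sphere _ _ _)
  filter_upwards [h_sphere] with p hp hpμ
  refine hp (mem_sphere_zero_iff_norm.2 ?_)
  rw [← hpμ, sqrt_sq (norm_nonneg p)]

theorem integral_comp_norm_sq (g : ℝ → ℝ) :
    ∫ p : EuclideanSpace ℝ (Fin 3), g (‖p‖ ^ 2) = 2 * π * ∫ t in Ioi 0, √t * g t := by
  have h_ball : volume.real (Metric.ball (0 : EuclideanSpace ℝ (Fin 3)) 1) = π * 4 / 3 := by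
    rw [Measure.real, EuclideanSpace.volume_ball_fin_three, ENNReal.ofReal_one, one_pow, one_mul,
      ENNReal.toReal_ofReal (by positivity)]
  have h_sq : ∫ r in Ioi 0, r ^ 2 * g (r ^ 2) = ∫ t in Ioi 0, √t / 2 * g t := by
    rw [← integral_comp_rpow_Ioi_of_pos (g := fun t => √t / 2 * g t) two_pos]
    refine setIntegral_congr_fun measurableSet_Ioi fun r (hr : 0 < r) => ?_
    norm_num [sqrt_sq hr.le]
    ring
  have h_polar := integral_fun_norm_addHaar (volume : Measure (EuclideanSpace ℝ (Fin 3)))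
    (fun r => g (r ^ 2))
  simp only [h_ball, finrank_euclideanSpace_fin, Nat.add_one_sub_one, smul_eq_mul, nsmul_eq_mul,
    h_sq] at h_polar
  rw [h_polar]
  simp only [div_mul_eq_mul_div, integral_div]
  push_cast
  ring

/-- Twice the integrand of `√μ * mμ μ T` in the dimensionless energy variable
`x = ‖p‖² / μ - 1`, with `c = μ / T`. The physical range is `x > -1`; below it the square roots
vanish, and the integrand with them. -/
noncomputable def reducedIntegrand (c x : ℝ) : ℝ :=
  tanh (c * x / 2) * √(1 + x) / x - (√(1 + x))⁻¹

theorem reducedIntegrand_of_le_neg_one {c x : ℝ} (hx : x ≤ -1) : reducedIntegrand c x = 0 := by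
  rw [reducedIntegrand, sqrt_eq_zero_of_nonpos (by linarith)]
  simp

theorem reducedIntegrand_neg (c x : ℝ) :
    reducedIntegrand c (-x) = tanh (c * x / 2) * √(1 - x) / x - (√(1 - x))⁻¹ := by
  rw [reducedIntegrand, mul_neg, neg_div, tanh_neg, neg_mul, neg_div_neg_eq, ← sub_eq_add_neg]

theorem integral_reducedIntegrand_sub_one (c : ℝ) :
    ∫ s in Ioi 0, reducedIntegrand c (s - 1) = ∫ x, reducedIntegrand c x := by
  rw [setIntegral_eq_integral_of_forall_compl_eq_zero fun s hs =>
    reducedIntegrand_of_le_neg_one (by linarith [notMem_Ioi.1 hs])]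
  exact integral_sub_right_eq_self _ 1

theorem sqrt_mul_tanh_div_sub_one_div_mul {μ T : ℝ} (hμ : 0 < μ) (s : ℝ) :
    √(μ * s) * (tanh ((μ * s - μ) / T / 2) / (μ * s - μ) - 1 / (μ * s)) =
      (√μ)⁻¹ * reducedIntegrand (μ / T) (s - 1) := by
  have h_arg : (μ * s - μ) / T / 2 = μ / T * (s - 1) / 2 := by ring
  rw [reducedIntegrand, add_sub_cancel, h_arg, ← mul_sub_one, sqrt_mul hμ.le, ← sqrt_div_self,
    ← sqrt_div_self]
  field

theorem mμ_eq_integral_reducedIntegrand {μ T : ℝ} (hμ : 0 < μ) :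
    mμ μ T = (√μ)⁻¹ * ((∫ x, reducedIntegrand (μ / T) x) / 2) := by
  have h_energy : ∫ p : EuclideanSpace ℝ (Fin 3), (1 / KTmu T μ p - 1 / ‖p‖ ^ 2) =
      2 * π * ∫ t in Ioi 0, √t * (tanh ((t - μ) / T / 2) / (t - μ) - 1 / t) := by
    rw [← integral_comp_norm_sq]
    refine integral_congr_ae ?_
    filter_upwards [ae_norm_sq_ne μ] with p hp
    rw [one_div_KTmu hp]
  have h_scale := integral_comp_mul_left_Ioi'
    (fun t => √t * (tanh ((t - μ) / T / 2) / (t - μ) - 1 / t)) 0 hμ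
  simp only [mul_zero, sqrt_mul_tanh_div_sub_one_div_mul hμ, integral_const_mul,
    integral_reducedIntegrand_sub_one, smul_eq_mul] at h_scale
  rw [mμ, h_energy, ← h_scale]
  field_simp
  ring

theorem integral_eq_integral_Ioi_add_integral_Ioi_comp_neg {f : ℝ → ℝ}
    (hf : IntegrableOn f (Ioi 0)) (hf_neg : IntegrableOn (fun x => f (-x)) (Ioi 0)) :
    ∫ x, f x = (∫ x in Ioi 0, f x) + ∫ x in Ioi 0, f (-x) := by
  have hf_Iic : IntegrableOn f (Iic 0) := by
    rw [integrableOn_Iic_iff_integrableOn_Iio]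
    simpa using hf_neg.comp_neg
  rw [integral_comp_neg_Ioi, neg_zero, add_comm, intervalIntegral.integral_Iic_add_Ioi hf_Iic hf]

section Halves

variable {c : ℝ} (hc : 0 < c)
include hc

theorem integrableOn_Ioi_reducedIntegrand : IntegrableOn (reducedIntegrand c) (Ioi 0) :=
  integrableOn_tanh_mul_weight_sub hc (by fun_prop) (fun _ => abs_sqrt_one_add_sub_one_le)
    integrableOn_sqrt_one_add_sub_one_div

theorem abs_integral_Ioi_reducedIntegrand_sub_le :
    |(∫ x in Ioi 0, reducedIntegrand c x) -
      (log c + eulerMascheroniConstant + log (2 / π) + 2 * log 2)| ≤ 2 / c := by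
  have h_weight := abs_integral_tanh_mul_weight_sub_le hc (by fun_prop)
    (fun _ => abs_sqrt_one_add_sub_one_le) integrableOn_sqrt_one_add_sub_one_div
  rwa [integral_sqrt_one_add_sub_one_div, mul_one] at h_weight

theorem integrableOn_Ioi_reducedIntegrand_neg :
    IntegrableOn (fun x => reducedIntegrand c (-x)) (Ioi 0) := by
  simp only [reducedIntegrand_neg]
  exact integrableOn_tanh_mul_weight_sub hc (by fun_prop) (fun _ => abs_sqrt_one_sub_sub_one_le)
    integrableOn_sqrt_one_sub_sub_one_div

theorem abs_integral_Ioi_reducedIntegrand_neg_sub_le :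
    |(∫ x in Ioi 0, reducedIntegrand c (-x)) -
      (log c + eulerMascheroniConstant + log (2 / π) + (2 * log 2 - 4))| ≤ 2 / c := by
  have h_weight := abs_integral_tanh_mul_weight_sub_le hc (by fun_prop)
    (fun _ => abs_sqrt_one_sub_sub_one_le) integrableOn_sqrt_one_sub_sub_one_div
  simp only [reducedIntegrand_neg]
  rwa [integral_sqrt_one_sub_sub_one_div, mul_one] at h_weight

theorem abs_integral_reducedIntegrand_sub_le :
    |(∫ x, reducedIntegrand c x) / 2 - (log c + eulerMascheroniConstant - 2 + log (8 / π))| ≤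
      2 / c := by
  have h_log : log (8 / π) = 2 * log 2 + log (2 / π) := by
    rw [← log_rpow two_pos, ← log_mul (by positivity) (by positivity)]
    ring_nf
  have h_above := abs_le.1 (abs_integral_Ioi_reducedIntegrand_sub_le hc)
  have h_below := abs_le.1 (abs_integral_Ioi_reducedIntegrand_neg_sub_le hc)
  rw [integral_eq_integral_Ioi_add_integral_Ioi_comp_neg (integrableOn_Ioi_reducedIntegrand hc)
    (integrableOn_Ioi_reducedIntegrand_neg hc), h_log, abs_le]
  constructor <;> linarith

end Halves

theorem abs_mμ_sub_le {μ T : ℝ} (hμ : 0 < μ) (hT : 0 < T) :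
    |mμ μ T - (√μ)⁻¹ * (log (μ / T) + eulerMascheroniConstant - 2 + log (8 / π))| ≤
      (√μ)⁻¹ * (2 / (μ / T)) := by
  rw [mμ_eq_integral_reducedIntegrand hμ, ← mul_sub, abs_mul, abs_of_pos (by positivity)]
  gcongr
  exact abs_integral_reducedIntegrand_sub_le (div_pos hμ hT)

theorem stmt_5 (μ : ℝ) (hμ : 0 < μ) :
    Tendsto (fun T : ℝ =>
        mμ μ T - (Real.sqrt μ)⁻¹ *
          (Real.log (μ / T) + Real.eulerMascheroniConstant - 2 + Real.log (8 / Real.pi)))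
      (nhdsWithin 0 (Set.Ioi 0)) (nhds 0) := by
  have h_bound : Tendsto (fun T => (√μ)⁻¹ * (2 / (μ / T))) (𝓝[>] 0) (𝓝 0) := by
    simp only [div_div_eq_mul_div]
    exact (Continuous.tendsto' (by fun_prop) 0 0 (by simp)).mono_left nhdsWithin_le_nhds
  refine squeeze_zero_norm' ?_ h_bound
  filter_upwards [self_mem_nhdsWithin] with T hT
  exact abs_mμ_sub_le hμ hT
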